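/- Let n ≥ 1, let b ∈ X_n, and let P be admissible for b. Define the rational function R(z) = P(z)² / ∏_{j=1}^{2n} (z − b_j) on ℂ ∖ {b_1, …, b_{2n}} (so that R = f_P² on ℍ). Then, as z → b_1 within ℍ, (z − b_1)·R(z) → −1 and ((z − b_1)·R(z) + 1)/(z − b_1) → −8·∂_{b_1}(log Z)(b); equivalently, R has a simple pole at b_1 with expansion (z − b_1)·R(z) = −1 − 8·∂_{b_1}(log Z)(b)·(z − b_1) + o(z − b_1). -/

import Mathlib

open scoped BigOperators
open Finset

noncomputable section

/-- The chamber `X_n = {b : b₁ < b₂ < ⋯ < b₂ₙ}`. -/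
def chamber (n : ℕ) : Set (Fin (2*n) → ℝ) := {b | StrictMono b}

/-- For `k : Fin n` (0-based), `idx n k false` is the index of `b_{2k-1}` (1-based),
and `idx n k true` is the index of `b_{2k}` (1-based). -/
def idx (n : ℕ) (k : Fin n) (s : Bool) : Fin (2*n) :=
  if s then ⟨2*k.val+1, by have := k.isLt; omega⟩ else ⟨2*k.val, by have := k.isLt; omega⟩

/-- The sign `σ_i ∈ {±1}` encoded by a boolean configuration. -/
def sgn {n : ℕ} (σ : Fin n → Bool) (i : Fin n) : ℝ := if σ i then 1 else -1

/-- The cross-ratio `χ_{ij}(b)`. -/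
def chi (n : ℕ) (b : Fin (2*n) → ℝ) (i j : Fin n) : ℝ :=
  ((b (idx n i true) - b (idx n j true)) * (b (idx n i false) - b (idx n j false))) /
  ((b (idx n i true) - b (idx n j false)) * (b (idx n i false) - b (idx n j true)))

/-- The multiple SLE_{16/3} partition function `Z`. -/
def Zfun (n : ℕ) (b : Fin (2*n) → ℝ) : ℝ :=
  (∏ k : Fin n, (b (idx n k true) - b (idx n k false)) ^ (-(1:ℝ)/8)) *
  ((∑ σ : Fin n → Bool, ∏ p ∈ Finset.univ.filter (fun p : Fin n × Fin n => p.1 < p.2),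
      chi n b p.1 p.2 ^ (sgn σ p.1 * sgn σ p.2 / 4)) ^ ((1:ℝ)/2))

/-- Partial derivative in the `i`-th coordinate. -/
def pderiv' {m : ℕ} (i : Fin m) (f : (Fin m → ℝ) → ℝ) (x : Fin m → ℝ) : ℝ :=
  fderiv ℝ f x (Pi.single i 1)


/-- The upper half-plane `ℍ`. -/
def UHP : Set ℂ := {z | 0 < z.im}

/-- `D(z) = ∏_{j=1}^{2n} (z − b_j)^{1/2}` with the principal branch of the square root. -/
def Dfun (n : ℕ) (b : Fin (2*n) → ℝ) (z : ℂ) : ℂ :=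
  ∏ j : Fin (2*n), (z - (b j : ℂ)) ^ ((1:ℂ)/2)

/-- `f_P(z) = P(z)/D(z)`. -/
def fP (n : ℕ) (b : Fin (2*n) → ℝ) (P : Polynomial ℂ) (z : ℂ) : ℂ :=
  Polynomial.eval z P / Dfun n b z

/-- `P` is admissible for `b`: `deg P ≤ n − 1`, the matching conditions (i) hold at the
pairs `(b_{2i−1}, b_{2i})`, `i = 2, …, n`, and the normalization (ii) holds at `b₁`. -/
def Admissible (n : ℕ) (hn : 0 < n) (b : Fin (2*n) → ℝ) (P : Polynomial ℂ) : Prop :=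
  P.natDegree ≤ n - 1 ∧
  (∀ k : Fin n, 1 ≤ k.val → ∃ L : ℂ,
      Filter.Tendsto
        (fun z : ℂ => fP n b P z * (z - (b (idx n k false) : ℂ)) ^ ((1:ℂ)/2)
          * (z - (b (idx n k true) : ℂ)) ^ ((1:ℂ)/2))
        (nhdsWithin (b (idx n k false) : ℂ) UHP) (nhds L) ∧
      Filter.Tendsto
        (fun z : ℂ => fP n b P z * (z - (b (idx n k false) : ℂ)) ^ ((1:ℂ)/2)
          * (z - (b (idx n k true) : ℂ)) ^ ((1:ℂ)/2))
        (nhdsWithin (b (idx n k true) : ℂ) UHP) (nhds (-L))) ∧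
  Filter.Tendsto
    (fun z : ℂ => (z - (b ⟨0, by omega⟩ : ℂ)) ^ ((1:ℂ)/2) * fP n b P z)
    (nhdsWithin (b ⟨0, by omega⟩ : ℂ) UHP) (nhds Complex.I)

end

/-!
Dividing the boundary values of `f_P` near the `i`-th pair by the common sign of the remaining
square roots turns the matching condition there into the linear equation
`∑ₛ P(b_{i,s}) / M_{i,s} = 0` with positive weights. These `n - 1` equations, together with the
value at a base point `a`, determine a polynomial of degree less than `n`: the determinant of the
system is a positive combination of Vandermonde determinants with increasing nodes.

An explicit solution is `Q = ∑_σ w_σ ∏_j (z - x_j(σ)) / (a - x_j(σ))`, where `w_σ` is the weight of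
the spin configuration `σ` in `Z` and `x_j(σ)` is one of the two points of the `j`-th pair,
selected by the sign of `σ_o σ_j` relative to the base pair `o`; the terms of each matching
equation cancel in pairs under reversal of the spin at `i`. Hence `P` is a multiple of `Q`.

Writing `Y` for the sum of `(a - b_m)⁻¹` over the points outside the base pair, each configuration
satisfies `∑_j (a - x_j(σ))⁻¹ = Y / 2 + 2 ∂_a log w_σ`. Averaging over `σ` gives
`2 (log Q)'(a) - ∑_m (a - b_m)⁻¹ = 8 ∂_a log Z`, with `m` ranging over the points other than `a`;
the left-hand side is the logarithmic derivative at `a` of `(z - a) R(z)`.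
-/

namespace MultipleSLE

open Filter Polynomial Topology

section LogDerivative

variable {𝕜 E ι : Type*} [NontriviallyNormedField 𝕜] [NormedAddCommGroup E] [NormedSpace 𝕜 E]

/-- `ℓ` is the logarithmic derivative of `f` at `x` in the direction `v`. Differentiability of `f`
in all directions is part of the definition, so that `fderiv` takes no junk value. -/
structure HasLogDerivAlong (f : E → 𝕜) (ℓ : 𝕜) (x v : E) : Prop where
  ne_zero : f x ≠ 0
  differentiableAt : DifferentiableAt 𝕜 f x
  fderiv_apply : fderiv 𝕜 f x v = f x * ℓ

namespace HasLogDerivAlong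

variable {f g : E → 𝕜} {ℓ m : 𝕜} {x v : E}

theorem const {k : 𝕜} (hk : k ≠ 0) : HasLogDerivAlong (fun _ : E => k) 0 x v :=
  ⟨hk, differentiableAt_const k, by simp⟩

theorem mul (hf : HasLogDerivAlong f ℓ x v) (hg : HasLogDerivAlong g m x v) :
    HasLogDerivAlong (fun y => f y * g y) (ℓ + m) x v where
  ne_zero := mul_ne_zero hf.ne_zero hg.ne_zero
  differentiableAt := hf.differentiableAt.fun_mul hg.differentiableAt
  fderiv_apply := by
    rw [fderiv_fun_mul hf.differentiableAt hg.differentiableAt]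
    simp only [_root_.add_apply, _root_.smul_apply, smul_eq_mul,
      hf.fderiv_apply, hg.fderiv_apply]
    ring

theorem inv (hf : HasLogDerivAlong f ℓ x v) : HasLogDerivAlong (fun y => (f y)⁻¹) (-ℓ) x v where
  ne_zero := inv_ne_zero hf.ne_zero
  differentiableAt := hf.differentiableAt.fun_inv hf.ne_zero
  fderiv_apply := by
    have hne := hf.ne_zero
    have hinv : HasFDerivAt (fun y => (f y)⁻¹) (-(f x ^ 2)⁻¹ • fderiv 𝕜 f x) x :=
      (hasDerivAt_inv hne).comp_hasFDerivAt x hf.differentiableAt.hasFDerivAt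
    rw [hinv.fderiv, _root_.smul_apply, hf.fderiv_apply, smul_eq_mul]
    field_simp

theorem div (hf : HasLogDerivAlong f ℓ x v) (hg : HasLogDerivAlong g m x v) :
    HasLogDerivAlong (fun y => f y / g y) (ℓ - m) x v := by
  simpa only [div_eq_mul_inv, sub_eq_add_neg] using hf.mul hg.inv

theorem prod {s : Finset ι} {f : ι → E → 𝕜} {ℓ : ι → 𝕜}
    (hf : ∀ i ∈ s, HasLogDerivAlong (f i) (ℓ i) x v) :
    HasLogDerivAlong (fun y => ∏ i ∈ s, f i y) (∑ i ∈ s, ℓ i) x v := by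
  classical
  induction s using Finset.induction_on with
  | empty => simpa using const one_ne_zero
  | insert i s hi ih =>
    simp only [Finset.prod_insert hi, Finset.sum_insert hi]
    exact (hf i (mem_insert_self i s)).mul (ih fun j hj => hf j (mem_insert_of_mem hj))

theorem sum {s : Finset ι} {f : ι → E → 𝕜} {ℓ : ι → 𝕜}
    (hf : ∀ i ∈ s, HasLogDerivAlong (f i) (ℓ i) x v) (hne : ∑ i ∈ s, f i x ≠ 0) :
    HasLogDerivAlong (fun y => ∑ i ∈ s, f i y)
      ((∑ i ∈ s, f i x * ℓ i) / ∑ i ∈ s, f i x) x v where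
  ne_zero := hne
  differentiableAt := DifferentiableAt.fun_sum fun i hi => (hf i hi).differentiableAt
  fderiv_apply := by
    rw [fderiv_fun_sum fun i hi => (hf i hi).differentiableAt, mul_div_cancel₀ _ hne,
      _root_.sum_apply]
    exact sum_congr rfl fun i hi => (hf i hi).fderiv_apply

theorem rpow_const {E : Type*} [NormedAddCommGroup E] [NormedSpace ℝ E] {f : E → ℝ} {ℓ : ℝ}
    {x v : E} (hf : HasLogDerivAlong f ℓ x v) (hpos : 0 < f x) (e : ℝ) :
    HasLogDerivAlong (fun y => f y ^ e) (e * ℓ) x v where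
  ne_zero := (Real.rpow_pos_of_pos hpos e).ne'
  differentiableAt := hf.differentiableAt.rpow_const (Or.inl hpos.ne')
  fderiv_apply := by
    rw [(hf.differentiableAt.hasFDerivAt.rpow_const (p := e) (Or.inl hpos.ne')).fderiv,
      Real.rpow_sub_one hpos.ne', _root_.smul_apply, hf.fderiv_apply, smul_eq_mul]
    field_simp

theorem fderiv_log_apply {E : Type*} [NormedAddCommGroup E] [NormedSpace ℝ E] {f : E → ℝ} {ℓ : ℝ}
    {x v : E} (hf : HasLogDerivAlong f ℓ x v) :
    fderiv ℝ (fun y => Real.log (f y)) x v = ℓ := by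
  rw [fderiv.log hf.differentiableAt hf.ne_zero, _root_.smul_apply, hf.fderiv_apply,
    smul_eq_mul, inv_mul_cancel_left₀ hf.ne_zero]

theorem coord_sub [Fintype ι] {x v : ι → 𝕜} {i j : ι} (hij : x i ≠ x j) :
    HasLogDerivAlong (fun y : ι → 𝕜 => y i - y j) ((v i - v j) / (x i - x j)) x v where
  ne_zero := sub_ne_zero.mpr hij
  differentiableAt := by fun_prop
  fderiv_apply := by
    rw [((hasFDerivAt_apply i x).fun_sub (hasFDerivAt_apply j x)).fderiv,
      mul_div_cancel₀ _ (sub_ne_zero.mpr hij)]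
    rfl

end HasLogDerivAlong

end LogDerivative

section Unisolvence

variable {n : ℕ} {κ : Type*} [Fintype κ]

theorem det_sum_vandermonde_pos [Nonempty κ] {x w : Fin n → κ → ℝ} (hw : ∀ i s, 0 < w i s)
    (hx : ∀ i j, i < j → ∀ s t, x i s < x j t) :
    0 < (Matrix.of fun i k : Fin n => ∑ s, w i s * x i s ^ (k : ℕ)).det := by
  have hrows : (Matrix.of fun i k : Fin n => ∑ s, w i s * x i s ^ (k : ℕ)) =
      fun i => ∑ s, w i s • fun k : Fin n => x i s ^ (k : ℕ) := by
    ext i k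
    simp
  have hexpand : (Matrix.of fun i k : Fin n => ∑ s, w i s * x i s ^ (k : ℕ)).det =
      ∑ r : Fin n → κ, (∏ i, w i (r i)) * (Matrix.vandermonde fun i => x i (r i)).det := by
    rw [hrows]
    exact (Matrix.detRowAlternating.toMultilinearMap.map_sum _).trans
      (sum_congr rfl fun r _ => Matrix.detRowAlternating.map_smul_univ _ _)
  rw [hexpand]
  refine sum_pos (fun r _ => mul_pos (prod_pos fun i _ => hw i (r i)) ?_) univ_nonempty
  rw [Matrix.det_vandermonde]
  exact prod_pos fun i _ => prod_pos fun j hj => sub_pos.mpr (hx i j (mem_Ioi.mp hj) _ _)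

theorem eq_zero_of_sum_weight_mul_eval_eq_zero [Nonempty κ] {x w : Fin n → κ → ℝ}
    (hw : ∀ i s, 0 < w i s) (hx : ∀ i j, i < j → ∀ s t, x i s < x j t)
    {T : ℂ[X]} (hdeg : T.natDegree < n)
    (hT : ∀ i, ∑ s, (w i s : ℂ) * T.eval (x i s : ℂ) = 0) : T = 0 := by
  set A : Matrix (Fin n) (Fin n) ℝ := Matrix.of fun i k => ∑ s, w i s * x i s ^ (k : ℕ) with hA
  have hdet : (A.map Complex.ofRealHom).det ≠ 0 := by
    rw [← RingHom.mapMatrix_apply, ← RingHom.map_det]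
    exact Complex.ofReal_ne_zero.mpr (det_sum_vandermonde_pos hw hx).ne'
  have hmul : (A.map Complex.ofRealHom).mulVec (fun k : Fin n => T.coeff k) = 0 := by
    funext i
    rw [Pi.zero_apply, ← hT i]
    simp only [Matrix.mulVec, dotProduct, hA, Matrix.map_apply, Matrix.of_apply,
      Complex.ofRealHom_eq_coe, Complex.ofReal_sum, Complex.ofReal_mul, Complex.ofReal_pow,
      Polynomial.eval_eq_sum_range' hdeg, sum_mul, mul_sum]
    rw [sum_comm]
    refine sum_congr rfl fun s _ => ?_
    rw [← Fin.sum_univ_eq_sum_range fun k => (w i s : ℂ) * (T.coeff k * (x i s : ℂ) ^ k)]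
    exact sum_congr rfl fun k _ => by ring
  have hcoeff := Matrix.eq_zero_of_mulVec_eq_zero hdet hmul
  ext k
  by_cases hk : k < n
  · exact congrFun hcoeff ⟨k, hk⟩
  · exact Polynomial.coeff_eq_zero_of_natDegree_lt (by omega)

end Unisolvence

section PairProducts

variable {ι M : Type*} [Fintype ι] [LinearOrder ι] [CommMonoid M]

@[to_additive]
theorem prod_lt_filter_eq_or_eq (i : ι) {g : ι → ι → M} (hg : ∀ p q, g p q = g q p) :
    ∏ p : ι × ι with p.1 < p.2 ∧ (p.1 = i ∨ p.2 = i), g p.1 p.2 = ∏ j ∈ univ.erase i, g i j := by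
  refine prod_nbij' (fun p => if p.1 = i then p.2 else p.1) (fun j => (min i j, max i j))
    ?_ ?_ ?_ ?_ ?_ <;> grind

@[to_additive]
theorem prod_lt_eq_prod_erase_mul (i : ι) {g : ι → ι → M} (hg : ∀ p q, g p q = g q p) :
    ∏ p : ι × ι with p.1 < p.2, g p.1 p.2 =
      (∏ j ∈ univ.erase i, g i j) *
        ∏ p : ι × ι with p.1 < p.2 ∧ ¬(p.1 = i ∨ p.2 = i), g p.1 p.2 := by
  rw [← prod_lt_filter_eq_or_eq i hg, ← filter_filter, ← filter_filter,
    prod_filter_mul_prod_filter_not]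

end PairProducts

section Nodes

variable {n : ℕ}

theorem idx_val (k : Fin n) (s : Bool) : (idx n k s : ℕ) = 2 * k + s.toNat := by
  cases s <;> rfl

theorem idx_inj {i j : Fin n} {s t : Bool} : idx n i s = idx n j t ↔ i = j ∧ s = t := by
  rw [Fin.ext_iff, Fin.ext_iff, idx_val, idx_val]
  cases s <;> cases t <;> simp <;> omega

theorem idx_lt_idx {i j : Fin n} (hij : i < j) (s t : Bool) : idx n i s < idx n j t := by
  rw [Fin.lt_def, idx_val, idx_val]
  have := s.toNat_le
  omega

@[to_additive]
theorem prod_eq_prod_idx {M : Type*} [CommMonoid M] (f : Fin (2 * n) → M) :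
    ∏ m, f m = ∏ k : Fin n, f (idx n k false) * f (idx n k true) := by
  have hinj : Function.Injective fun p : Fin n × Bool => idx n p.1 p.2 :=
    fun _ _ h => Prod.ext_iff.mpr (idx_inj.mp h)
  have hbij := (Fintype.bijective_iff_injective_and_card _).mpr ⟨hinj, by simp [mul_comm]⟩
  rw [← hbij.prod_comp, Fintype.prod_prod_type]
  exact prod_congr rfl fun k _ => by rw [Fintype.prod_bool, mul_comm]

theorem sum_erase_idx_false {M : Type*} [AddCommGroup M] (f : Fin (2 * n) → M) (o : Fin n) :
    ∑ m ∈ univ.erase (idx n o false), f m =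
      f (idx n o true) + ∑ j ∈ univ.erase o, (f (idx n j false) + f (idx n j true)) := by
  refine add_left_cancel (a := f (idx n o false)) ?_
  rw [add_sum_erase _ _ (mem_univ _), sum_eq_sum_idx, ← add_sum_erase _ _ (mem_univ o), add_assoc]

variable {b : Fin (2 * n) → ℝ}

theorem sub_mul_sub_pos (hb : b ∈ chamber n) {i j : Fin n} (hij : i ≠ j) (s s' t t' : Bool) :
    0 < (b (idx n i s) - b (idx n j t)) * (b (idx n i s') - b (idx n j t')) := by
  have hmono : StrictMono b := hb
  rcases lt_or_gt_of_ne hij with h | h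
  · exact mul_pos_of_neg_of_neg (sub_neg.mpr (hmono (idx_lt_idx h s t)))
      (sub_neg.mpr (hmono (idx_lt_idx h s' t')))
  · exact mul_pos (sub_pos.mpr (hmono (idx_lt_idx h t s)))
      (sub_pos.mpr (hmono (idx_lt_idx h t' s')))

theorem eq_node_iff (hb : b ∈ chamber n) {i j : Fin n} {s t : Bool} :
    b (idx n i s) = b (idx n j t) ↔ i = j ∧ s = t :=
  (StrictMono.injective hb).eq_iff.trans idx_inj

theorem node_sub_ne_zero (hb : b ∈ chamber n) {i j : Fin n} (hij : i ≠ j) (s t : Bool) :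
    b (idx n i s) - b (idx n j t) ≠ 0 :=
  sub_ne_zero.mpr fun h => hij ((eq_node_iff hb).mp h).1

theorem chi_comm (b : Fin (2 * n) → ℝ) (i j : Fin n) : chi n b i j = chi n b j i := by
  unfold chi
  congr 1 <;> ring

theorem chi_pos (hb : b ∈ chamber n) {i j : Fin n} (hij : i ≠ j) : 0 < chi n b i j :=
  div_pos (sub_mul_sub_pos hb hij _ _ _ _) (sub_mul_sub_pos hb hij _ _ _ _)

end Nodes

section GibbsWeight

variable {n : ℕ} {b : Fin (2 * n) → ℝ}

/-- The weight of the spin configuration `σ` in the sum defining `Zfun`. -/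
noncomputable def gibbsWeight (b : Fin (2 * n) → ℝ) (σ : Fin n → Bool) : ℝ :=
  ∏ p : Fin n × Fin n with p.1 < p.2, chi n b p.1 p.2 ^ (sgn σ p.1 * sgn σ p.2 / 4)

theorem gibbsWeight_pos (hb : b ∈ chamber n) (σ : Fin n → Bool) : 0 < gibbsWeight b σ :=
  prod_pos fun _ hp => Real.rpow_pos_of_pos (chi_pos hb (mem_filter.mp hp).2.ne) _

theorem sum_gibbsWeight_pos (hb : b ∈ chamber n) : 0 < ∑ σ : Fin n → Bool, gibbsWeight b σ :=
  sum_pos (fun σ _ => gibbsWeight_pos hb σ) univ_nonempty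

/-- The configuration obtained from `σ` by reversing the spin at `i`. -/
def flipSpin (i : Fin n) (σ : Fin n → Bool) : Fin n → Bool := Function.update σ i (!σ i)

theorem flipSpin_self (i : Fin n) (σ : Fin n → Bool) : flipSpin i σ i = !σ i :=
  Function.update_self ..

theorem flipSpin_of_ne {i j : Fin n} (hj : j ≠ i) (σ : Fin n → Bool) : flipSpin i σ j = σ j :=
  Function.update_of_ne hj ..

theorem flipSpin_involutive (i : Fin n) : Function.Involutive (flipSpin i) := fun σ => by
  simp [flipSpin]

theorem sgn_flipSpin_self (i : Fin n) (σ : Fin n → Bool) : sgn (flipSpin i σ) i = -sgn σ i := by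
  cases h : σ i <;> simp [sgn, flipSpin_self, h]

theorem sgn_flipSpin_of_ne {i j : Fin n} (hj : j ≠ i) (σ : Fin n → Bool) :
    sgn (flipSpin i σ) j = sgn σ j := by
  rw [sgn, sgn, flipSpin_of_ne hj]

theorem gibbsWeight_eq_flipSpin_mul (hb : b ∈ chamber n) (i : Fin n) (σ : Fin n → Bool) :
    gibbsWeight b σ = gibbsWeight b (flipSpin i σ) *
      ∏ j ∈ univ.erase i, chi n b i j ^ (sgn σ i * sgn σ j / 2) := by
  have hcomm (τ : Fin n → Bool) (p q : Fin n) : chi n b p q ^ (sgn τ p * sgn τ q / 4) =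
      chi n b q p ^ (sgn τ q * sgn τ p / 4) := by
    rw [chi_comm, mul_comm (sgn τ p)]
  rw [gibbsWeight, gibbsWeight, prod_lt_eq_prod_erase_mul i (hcomm _),
    prod_lt_eq_prod_erase_mul i (hcomm _), mul_right_comm, ← prod_mul_distrib]
  congr 1
  · refine prod_congr rfl fun j hj => ?_
    have hji := ne_of_mem_erase hj
    rw [← Real.rpow_add (chi_pos hb hji.symm), sgn_flipSpin_self, sgn_flipSpin_of_ne hji]
    congr 1
    ring
  · refine prod_congr rfl fun p hp => ?_
    obtain ⟨-, hp₁, hp₂⟩ : p.1 < p.2 ∧ p.1 ≠ i ∧ p.2 ≠ i := by simpa using hp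
    rw [sgn_flipSpin_of_ne hp₁, sgn_flipSpin_of_ne hp₂]

end GibbsWeight

section Observable

variable {n : ℕ} {b : Fin (2 * n) → ℝ}

/-- The modulus at the point `b_{i,s}` of the factor `((z - b_{j,0}) (z - b_{j,1}))^{1/2}` of the
denominator `Dfun`. -/
noncomputable def pairSqrt (b : Fin (2 * n) → ℝ) (i : Fin n) (s : Bool) (j : Fin n) : ℝ :=
  √((b (idx n i s) - b (idx n j false)) * (b (idx n i s) - b (idx n j true)))

theorem pairSqrt_pos (hb : b ∈ chamber n) {i j : Fin n} (hij : i ≠ j) (s : Bool) :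
    0 < pairSqrt b i s j :=
  Real.sqrt_pos.mpr (sub_mul_sub_pos hb hij _ _ _ _)

theorem div_sqrt_mul_sqrt_div {p q r s : ℝ} (hpr : 0 < p * r) (hpq : 0 < p * q)
    (hrs : 0 < r * s) : r / √(r * s) * √(s * p / (r * q)) = p / √(p * q) := by
  have hr : r ≠ 0 := left_ne_zero_of_mul hrs.ne'
  have hratio : 0 < p / r := by
    rw [← mul_div_mul_right p r hr]
    exact div_pos hpr (mul_self_pos.mpr hr)
  have hsplit : s * p / (r * q) = (p / r) ^ 2 * (r * s) / (p * q) := by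
    have := left_ne_zero_of_mul hpq.ne'
    have := right_ne_zero_of_mul hpq.ne'
    field_simp
  have hrs' := (Real.sqrt_pos.mpr hrs).ne'
  rw [hsplit, Real.sqrt_div' _ hpq.le, Real.sqrt_mul (sq_nonneg _), Real.sqrt_sq hratio.le]
  field_simp

/-- The endpoint of the `j`-th pair at which the `σ`-term of the observable vanishes: the left one
if the spins at `j` and at the base pair `o` agree, the right one otherwise. -/
def selectedNode (b : Fin (2 * n) → ℝ) (o : Fin n) (σ : Fin n → Bool) (j : Fin n) : ℝ :=
  b (idx n j (σ o ^^ σ j))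

theorem selectedNode_flipSpin_of_ne {o i j : Fin n} (hi : i ≠ o) (hj : j ≠ i)
    (b : Fin (2 * n) → ℝ) (σ : Fin n → Bool) :
    selectedNode b o (flipSpin i σ) j = selectedNode b o σ j := by
  rw [selectedNode, selectedNode, flipSpin_of_ne hj, flipSpin_of_ne hi.symm]

theorem sub_div_pairSqrt_mul_sqrt_chi (hb : b ∈ chamber n) {i j : Fin n} (hij : i ≠ j)
    (s : Bool) :
    (b (idx n i s) - b (idx n j (!s))) / pairSqrt b i s j * √(chi n b i j) =
      (b (idx n i (!s)) - b (idx n j (!s))) / pairSqrt b i (!s) j := by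
  have hpos := sub_mul_sub_pos hb hij
  unfold pairSqrt chi
  cases s
  · simpa only [mul_comm, Bool.not_false] using div_sqrt_mul_sqrt_div
      (hpos true false true true) (hpos true true true false) (hpos false false true false)
  · exact div_sqrt_mul_sqrt_div (hpos _ _ _ _) (hpos _ _ _ _) (hpos _ _ _ _)

theorem chi_rpow_mul_sub_selectedNode (hb : b ∈ chamber n) {i j : Fin n} (hij : i ≠ j)
    (o : Fin n) (σ : Fin n → Bool) (s : Bool) (hs : (σ o ^^ σ i) = !s) :
    chi n b i j ^ (sgn σ i * sgn σ j / 2) *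
        ((b (idx n i s) - selectedNode b o σ j) / pairSqrt b i s j) =
      (b (idx n i (!s)) - selectedNode b o σ j) / pairSqrt b i (!s) j := by
  have hchi := chi_pos hb hij
  by_cases hσ : σ i = σ j
  · have hsgn : sgn σ i * sgn σ j / 2 = 1 / 2 := by cases h : σ i <;> simp [sgn, ← hσ, h]
    rw [selectedNode, ← hσ, hs, hsgn, ← Real.sqrt_eq_rpow, mul_comm,
      sub_div_pairSqrt_mul_sqrt_chi hb hij]
  · have hsgn : sgn σ i * sgn σ j / 2 = -(1 / 2) := by
      cases h : σ i <;> cases h' : σ j <;> simp_all [sgn] <;> norm_num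
    have hj : (σ o ^^ σ j) = s := by
      rw [Bool.eq_not_of_ne (Ne.symm hσ), Bool.xor_not, hs, Bool.not_not]
    have hswap := sub_div_pairSqrt_mul_sqrt_chi hb hij (!s)
    rw [Bool.not_not] at hswap
    rw [selectedNode, hj, hsgn, Real.rpow_neg hchi.le, ← Real.sqrt_eq_rpow, ← hswap, mul_comm,
      mul_assoc, mul_inv_cancel₀ (Real.sqrt_pos.mpr hchi).ne', mul_one]

theorem gibbsWeight_mul_prod_flipSpin (hb : b ∈ chamber n) {o i : Fin n} (hi : i ≠ o)
    (σ : Fin n → Bool) (s : Bool) (hs : (σ o ^^ σ i) = !s) :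
    gibbsWeight b σ *
        ∏ j ∈ univ.erase i, (b (idx n i s) - selectedNode b o σ j) / pairSqrt b i s j =
      gibbsWeight b (flipSpin i σ) * ∏ j ∈ univ.erase i,
        (b (idx n i (!s)) - selectedNode b o (flipSpin i σ) j) / pairSqrt b i (!s) j := by
  rw [gibbsWeight_eq_flipSpin_mul hb i σ, mul_assoc, ← prod_mul_distrib]
  congr 1
  refine prod_congr rfl fun j hj => ?_
  have hji := ne_of_mem_erase hj
  rw [chi_rpow_mul_sub_selectedNode hb hji.symm o σ s hs, selectedNode_flipSpin_of_ne hi hji]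

/-- The modulus at `b_{i,s}` of the product of all factors of `Dfun` outside the `i`-th pair. -/
noncomputable def residualModulus (b : Fin (2 * n) → ℝ) (i : Fin n) (s : Bool) : ℝ :=
  ∏ j ∈ univ.erase i, pairSqrt b i s j

theorem residualModulus_pos (hb : b ∈ chamber n) (i : Fin n) (s : Bool) :
    0 < residualModulus b i s :=
  prod_pos fun _ hj => pairSqrt_pos hb (ne_of_mem_erase hj).symm s

/-- The contribution of `σ` to the Ising-type observable based at the left endpoint of the `o`-th
pair: the polynomial with roots `selectedNode b o σ j`, `j ≠ o`, taking the value `gibbsWeight b σ`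
at the base point. -/
noncomputable def observableTerm (b : Fin (2 * n) → ℝ) (o : Fin n) (σ : Fin n → Bool) : ℝ[X] :=
  C (gibbsWeight b σ) *
    ∏ j ∈ univ.erase o, Lagrange.basisDivisor (b (idx n o false)) (selectedNode b o σ j)

/-- The numerator of the explicit observable, an admissible polynomial up to normalization. -/
noncomputable def observablePoly (b : Fin (2 * n) → ℝ) (o : Fin n) : ℝ[X] :=
  ∑ σ, observableTerm b o σ

theorem sub_selectedNode_ne_zero (hb : b ∈ chamber n) {o j : Fin n} (hj : j ≠ o)
    (σ : Fin n → Bool) : b (idx n o false) - selectedNode b o σ j ≠ 0 :=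
  node_sub_ne_zero hb hj.symm _ _

theorem eval_observableTerm (b : Fin (2 * n) → ℝ) (o : Fin n) (σ : Fin n → Bool) (x : ℝ) :
    (observableTerm b o σ).eval x = gibbsWeight b σ * ∏ j ∈ univ.erase o,
      (x - selectedNode b o σ j) / (b (idx n o false) - selectedNode b o σ j) := by
  simp only [observableTerm, Lagrange.basisDivisor, eval_mul, eval_C, eval_prod, eval_sub, eval_X,
    div_eq_inv_mul]

theorem natDegree_observablePoly_lt (hb : b ∈ chamber n) (o : Fin n) :
    (observablePoly b o).natDegree < n := by
  have hterm (σ : Fin n → Bool) : (observableTerm b o σ).natDegree ≤ n - 1 := by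
    refine (natDegree_C_mul_le _ _).trans ((natDegree_prod_le _ _).trans_eq ?_)
    rw [sum_congr rfl fun j hj => Lagrange.natDegree_basisDivisor_of_ne
      (sub_ne_zero.mp (sub_selectedNode_ne_zero hb (ne_of_mem_erase hj) σ))]
    simp
  have := natDegree_sum_le_of_forall_le univ (observableTerm b o) fun σ _ => hterm σ
  exact this.trans_lt (Nat.sub_one_lt_of_lt o.pos)

theorem eval_observablePoly_base (hb : b ∈ chamber n) (o : Fin n) :
    (observablePoly b o).eval (b (idx n o false)) = ∑ σ, gibbsWeight b σ := by
  rw [observablePoly, eval_finsetSum]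
  refine sum_congr rfl fun σ _ => ?_
  rw [eval_observableTerm, prod_congr rfl fun j hj =>
    div_self (sub_selectedNode_ne_zero hb (ne_of_mem_erase hj) σ), prod_const_one, mul_one]

theorem eval_derivative_observablePoly_base (hb : b ∈ chamber n) (o : Fin n) :
    (derivative (observablePoly b o)).eval (b (idx n o false)) = ∑ σ, gibbsWeight b σ *
      ∑ j ∈ univ.erase o, (b (idx n o false) - selectedNode b o σ j)⁻¹ := by
  rw [observablePoly, derivative_sum, eval_finsetSum]
  refine sum_congr rfl fun σ _ => ?_
  rw [observableTerm, derivative_C_mul, derivative_prod_finset, eval_C_mul, eval_finsetSum]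
  congr 1
  refine sum_congr rfl fun j _ => ?_
  have hone : ∏ k ∈ (univ.erase o).erase j, (Lagrange.basisDivisor (b (idx n o false))
      (selectedNode b o σ k)).eval (b (idx n o false)) = 1 :=
    prod_eq_one fun k hk => Lagrange.eval_basisDivisor_left_of_ne <| sub_ne_zero.mp <|
      sub_selectedNode_ne_zero hb (ne_of_mem_erase (mem_of_mem_erase hk)) σ
  rw [eval_mul, eval_prod, hone, one_mul, Lagrange.basisDivisor]
  simp only [derivative_C_mul, derivative_sub, derivative_X, derivative_C, sub_zero, mul_one,
    eval_C]

theorem eval_observableTerm_of_selected {o i : Fin n} (hi : i ≠ o) {σ : Fin n → Bool} {s : Bool}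
    (hs : (σ o ^^ σ i) = s) : (observableTerm b o σ).eval (b (idx n i s)) = 0 := by
  rw [eval_observableTerm]
  refine mul_eq_zero_of_right _ (prod_eq_zero (mem_erase.mpr ⟨hi, mem_univ i⟩) ?_)
  rw [selectedNode, hs, sub_self, zero_div]

theorem eval_observableTerm_div_residualModulus (hb : b ∈ chamber n) {o i : Fin n} (hi : i ≠ o)
    {σ : Fin n → Bool} {s : Bool} (hs : (σ o ^^ σ i) = !s) :
    (observableTerm b o σ).eval (b (idx n i s)) / residualModulus b i s =
      (b (idx n i s) - b (idx n i (!s))) / ((b (idx n o false) - b (idx n i (!s))) *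
          (b (idx n i s) - b (idx n o false))) *
        (∏ j ∈ (univ.erase o).erase i, (b (idx n o false) - selectedNode b o σ j)⁻¹) *
        (gibbsWeight b σ *
          ∏ j ∈ univ.erase i, (b (idx n i s) - selectedNode b o σ j) / pairSqrt b i s j) := by
  have hbase : selectedNode b o σ o = b (idx n o false) := by rw [selectedNode, Bool.xor_self]
  have hsel : selectedNode b o σ i = b (idx n i (!s)) := by rw [selectedNode, hs]
  have hne := node_sub_ne_zero hb hi s false
  rw [eval_observableTerm, ← mul_prod_erase _ _ (mem_erase.mpr ⟨hi, mem_univ i⟩), prod_div_distrib,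
    prod_div_distrib, ← residualModulus,
    ← mul_prod_erase (univ.erase i) _ (mem_erase.mpr ⟨hi.symm, mem_univ o⟩),
    erase_right_comm (a := i), hbase, hsel, prod_inv_distrib]
  field_simp

theorem eval_observableTerm_flipSpin (hb : b ∈ chamber n) {o i : Fin n} (hi : i ≠ o)
    (σ : Fin n → Bool) (s : Bool) :
    (observableTerm b o (flipSpin i σ)).eval (b (idx n i (!s))) / residualModulus b i (!s) =
      -((observableTerm b o σ).eval (b (idx n i s)) / residualModulus b i s) := by
  have hxor : (flipSpin i σ o ^^ flipSpin i σ i) = !(σ o ^^ σ i) := by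
    rw [flipSpin_of_ne hi.symm, flipSpin_self, Bool.xor_not]
  by_cases hs : (σ o ^^ σ i) = s
  · rw [eval_observableTerm_of_selected hi hs,
      eval_observableTerm_of_selected hi (hxor.trans (congrArg _ hs)), zero_div, zero_div, neg_zero]
  replace hs := Bool.eq_not_of_ne hs
  have hnodes : ∏ j ∈ (univ.erase o).erase i,
        (b (idx n o false) - selectedNode b o (flipSpin i σ) j)⁻¹ =
      ∏ j ∈ (univ.erase o).erase i, (b (idx n o false) - selectedNode b o σ j)⁻¹ :=
    prod_congr rfl fun j hj => by
      rw [selectedNode_flipSpin_of_ne hi (ne_of_mem_erase hj)]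
  rw [eval_observableTerm_div_residualModulus hb hi hs,
    eval_observableTerm_div_residualModulus hb hi (hxor.trans (congrArg _ hs)),
    gibbsWeight_mul_prod_flipSpin hb hi σ s hs, hnodes, Bool.not_not, ← neg_mul, ← neg_mul,
    ← neg_div, neg_sub]
  congr 3
  ring

theorem sum_eval_observablePoly_div_residualModulus (hb : b ∈ chamber n) {o i : Fin n}
    (hi : i ≠ o) :
    ∑ s, (observablePoly b o).eval (b (idx n i s)) / residualModulus b i s = 0 := by
  simp only [observablePoly, eval_finsetSum, sum_div]
  rw [← Fintype.sum_prod_type']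
  refine sum_involution (fun p _ => (!p.1, flipSpin i p.2)) (fun p _ => ?_) (fun p _ _ => ?_)
    (fun _ _ => mem_univ _) (fun p _ => ?_)
  · rw [eval_observableTerm_flipSpin hb hi, add_neg_cancel]
  · simp [Prod.ext_iff]
  · simp [flipSpin_involutive i p.2]

theorem C_eval_base_mul_observablePoly (hb : b ∈ chamber n) (o : Fin n) {P : ℂ[X]}
    (hdeg : P.natDegree < n)
    (hP : ∀ i ≠ o, ∑ s, P.eval (b (idx n i s) : ℂ) / (residualModulus b i s : ℂ) = 0) :
    C (P.eval (b (idx n o false) : ℂ)) * (observablePoly b o).map Complex.ofRealHom =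
      C (((observablePoly b o).eval (b (idx n o false)) : ℝ) : ℂ) * P := by
  have hmono : StrictMono b := hb
  set Q := (observablePoly b o).map Complex.ofRealHom
  have hQeval (x : ℝ) : Q.eval (x : ℂ) = (((observablePoly b o).eval x : ℝ) : ℂ) :=
    eval_map_apply Complex.ofRealHom x
  rw [← sub_eq_zero]
  refine eq_zero_of_sum_weight_mul_eval_eq_zero
    (x := fun i s => b (idx n i (decide (i ≠ o) && s))) (w := fun i s => (residualModulus b i s)⁻¹)
    (fun i s => inv_pos.mpr (residualModulus_pos hb i s))
    (fun i j hij s t => hmono (idx_lt_idx hij _ _)) ?_ fun i => ?_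
  · refine (natDegree_sub_le _ _).trans_lt (max_lt ?_ ?_)
    · exact (natDegree_C_mul_le _ _).trans_lt
        (natDegree_map_le.trans_lt (natDegree_observablePoly_lt hb o))
    · exact (natDegree_C_mul_le _ _).trans_lt hdeg
  · by_cases hi : i = o
    · subst hi
      simp [hQeval, mul_comm]
    · have hQ0 : ∑ s, (residualModulus b i s : ℂ)⁻¹ * Q.eval (b (idx n i s) : ℂ) = 0 := by
        simp only [hQeval, inv_mul_eq_div]
        exact_mod_cast sum_eval_observablePoly_div_residualModulus hb hi
      have hP0 : ∑ s, (residualModulus b i s : ℂ)⁻¹ * P.eval (b (idx n i s) : ℂ) = 0 := by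
        simpa only [inv_mul_eq_div] using hP i hi
      simp only [hi, ne_eq, not_false_eq_true, decide_true, Bool.true_and, eval_sub, eval_mul,
        eval_C, mul_sub, sum_sub_distrib, Complex.ofReal_inv]
      simp only [mul_left_comm _ (P.eval (b (idx n o false) : ℂ)), ← mul_sum, hQ0,
        mul_left_comm _ (((observablePoly b o).eval (b (idx n o false)) : ℝ) : ℂ), hP0,
        mul_zero, sub_zero]

theorem eval_derivative_base_mul (hb : b ∈ chamber n) (o : Fin n) {P : ℂ[X]}
    (hdeg : P.natDegree < n)
    (hP : ∀ i ≠ o, ∑ s, P.eval (b (idx n i s) : ℂ) / (residualModulus b i s : ℂ) = 0) :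
    (derivative P).eval (b (idx n o false) : ℂ) *
        (((observablePoly b o).eval (b (idx n o false)) : ℝ) : ℂ) =
      (((derivative (observablePoly b o)).eval (b (idx n o false)) : ℝ) : ℂ) *
        P.eval (b (idx n o false) : ℂ) := by
  have h := congrArg (fun T => (derivative T).eval (b (idx n o false) : ℂ))
    (C_eval_base_mul_observablePoly hb o hdeg hP)
  have hQ : (derivative ((observablePoly b o).map Complex.ofRealHom)).eval
      (b (idx n o false) : ℂ) =
        (((derivative (observablePoly b o)).eval (b (idx n o false)) : ℝ) : ℂ) := by
    rw [derivative_map]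
    exact eval_map_apply Complex.ofRealHom _
  simp only [derivative_C_mul, eval_C_mul, hQ] at h
  linear_combination -h

end Observable

section PartitionFunction

variable {n : ℕ} {b : Fin (2 * n) → ℝ}

/-- The logarithmic derivative of `chi n · i j` at `b` in the direction `v`. -/
noncomputable def chiLogDeriv (b v : Fin (2 * n) → ℝ) (i j : Fin n) : ℝ :=
  (v (idx n i true) - v (idx n j true)) / (b (idx n i true) - b (idx n j true)) +
      (v (idx n i false) - v (idx n j false)) / (b (idx n i false) - b (idx n j false)) -
    ((v (idx n i true) - v (idx n j false)) / (b (idx n i true) - b (idx n j false)) +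
      (v (idx n i false) - v (idx n j true)) / (b (idx n i false) - b (idx n j true)))

theorem hasLogDerivAlong_chi (hb : b ∈ chamber n) {i j : Fin n} (hij : i ≠ j)
    (v : Fin (2 * n) → ℝ) :
    HasLogDerivAlong (fun y => chi n y i j) (chiLogDeriv b v i j) b v := by
  have hsub (s t : Bool) := HasLogDerivAlong.coord_sub (v := v)
    (sub_ne_zero.mp (node_sub_ne_zero hb hij s t))
  exact ((hsub true true).mul (hsub false false)).div ((hsub true false).mul (hsub false true))

theorem chiLogDeriv_comm (b v : Fin (2 * n) → ℝ) (i j : Fin n) :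
    chiLogDeriv b v i j = chiLogDeriv b v j i := by
  have hswap (k l : Fin (2 * n)) : (v k - v l) / (b k - b l) = (v l - v k) / (b l - b k) := by
    rw [← neg_div_neg_eq, neg_sub, neg_sub]
  simp only [chiLogDeriv, hswap (idx n i _)]
  ring

theorem chiLogDeriv_single_of_ne {o i j : Fin n} (hi : i ≠ o) (hj : j ≠ o)
    (b : Fin (2 * n) → ℝ) : chiLogDeriv b (Pi.single (idx n o false) 1) i j = 0 := by
  simp [chiLogDeriv, idx_inj, hi, hj]

theorem chiLogDeriv_single_self {o j : Fin n} (hj : j ≠ o) (b : Fin (2 * n) → ℝ) :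
    chiLogDeriv b (Pi.single (idx n o false) 1) o j =
      (b (idx n o false) - b (idx n j false))⁻¹ - (b (idx n o false) - b (idx n j true))⁻¹ := by
  simp [chiLogDeriv, idx_inj, hj]

theorem sum_sgn_mul_inv_sub_inv (b : Fin (2 * n) → ℝ) (o : Fin n) (σ : Fin n → Bool) :
    ∑ j ∈ univ.erase o, sgn σ o * sgn σ j / 4 *
        ((b (idx n o false) - b (idx n j false))⁻¹ - (b (idx n o false) - b (idx n j true))⁻¹) =
      (∑ j ∈ univ.erase o, (b (idx n o false) - selectedNode b o σ j)⁻¹) / 2 -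
        (∑ j ∈ univ.erase o, ((b (idx n o false) - b (idx n j false))⁻¹ +
          (b (idx n o false) - b (idx n j true))⁻¹)) / 4 := by
  rw [sum_div, sum_div, ← sum_sub_distrib]
  refine sum_congr rfl fun j _ => ?_
  cases ho : σ o <;> cases hj : σ j <;> simp [sgn, selectedNode, ho, hj] <;> ring

theorem hasLogDerivAlong_gibbsWeight (hb : b ∈ chamber n) (o : Fin n) (σ : Fin n → Bool) :
    HasLogDerivAlong (fun y => gibbsWeight y σ)
      ((∑ j ∈ univ.erase o, (b (idx n o false) - selectedNode b o σ j)⁻¹) / 2 -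
        (∑ j ∈ univ.erase o, ((b (idx n o false) - b (idx n j false))⁻¹ +
          (b (idx n o false) - b (idx n j true))⁻¹)) / 4)
      b (Pi.single (idx n o false) 1) := by
  set v : Fin (2 * n) → ℝ := Pi.single (idx n o false) 1 with hv
  have hpair (p : Fin n × Fin n) (hp : p ∈ univ.filter fun p : Fin n × Fin n => p.1 < p.2) :=
    (hasLogDerivAlong_chi hb (mem_filter.mp hp).2.ne v).rpow_const
      (chi_pos hb (mem_filter.mp hp).2.ne) (sgn σ p.1 * sgn σ p.2 / 4)
  have hcomm (i j : Fin n) : sgn σ i * sgn σ j / 4 * chiLogDeriv b v i j =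
      sgn σ j * sgn σ i / 4 * chiLogDeriv b v j i := by
    rw [chiLogDeriv_comm, mul_comm (sgn σ i)]
  have hfar : ∑ p : Fin n × Fin n with p.1 < p.2 ∧ ¬(p.1 = o ∨ p.2 = o),
      sgn σ p.1 * sgn σ p.2 / 4 * chiLogDeriv b v p.1 p.2 = 0 := by
    refine sum_eq_zero fun p hp => ?_
    obtain ⟨-, hp₁, hp₂⟩ : p.1 < p.2 ∧ p.1 ≠ o ∧ p.2 ≠ o := by simpa using hp
    rw [hv, chiLogDeriv_single_of_ne hp₁ hp₂, mul_zero]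
  have hnear : ∑ j ∈ univ.erase o, sgn σ o * sgn σ j / 4 * chiLogDeriv b v o j =
      ∑ j ∈ univ.erase o, sgn σ o * sgn σ j / 4 *
        ((b (idx n o false) - b (idx n j false))⁻¹ - (b (idx n o false) - b (idx n j true))⁻¹) :=
    sum_congr rfl fun j hj => by rw [hv, chiLogDeriv_single_self (ne_of_mem_erase hj)]
  have hprod := HasLogDerivAlong.prod hpair
  rwa [sum_lt_eq_sum_erase_add o hcomm, hfar, add_zero, hnear, sum_sgn_mul_inv_sub_inv] at hprod

theorem hasLogDerivAlong_prod_pair_sub (hb : b ∈ chamber n) (o : Fin n) :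
    HasLogDerivAlong
      (fun y : Fin (2 * n) → ℝ => ∏ k, (y (idx n k true) - y (idx n k false)) ^ (-(1 : ℝ) / 8))
      (-(b (idx n o false) - b (idx n o true))⁻¹ / 8) b (Pi.single (idx n o false) 1) := by
  have hpos (k : Fin n) : 0 < b (idx n k true) - b (idx n k false) :=
    sub_pos.mpr (hb (Fin.lt_def.mpr (by simp [idx_val])))
  convert HasLogDerivAlong.prod (s := univ) fun k _ =>
    (HasLogDerivAlong.coord_sub (v := Pi.single (idx n o false) 1)
      (sub_ne_zero.mp (hpos k).ne')).rpow_const (hpos k) (-(1 : ℝ) / 8) using 1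
  rw [sum_eq_single o]
  · have hv : (Pi.single (idx n o false) 1 : Fin (2 * n) → ℝ) (idx n o true) -
        (Pi.single (idx n o false) 1 : Fin (2 * n) → ℝ) (idx n o false) = -1 := by simp [idx_inj]
    rw [hv, ← neg_sub (b (idx n o true)), inv_neg]
    ring
  · intro k _ hk
    simp [idx_inj, hk]
  · simp

theorem pderiv_log_Zfun (hb : b ∈ chamber n) (o : Fin n) :
    8 * pderiv' (idx n o false) (fun y => Real.log (Zfun n y)) b =
      2 * ((derivative (observablePoly b o)).eval (b (idx n o false)) /
          (observablePoly b o).eval (b (idx n o false))) -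
        ∑ m ∈ univ.erase (idx n o false), (b (idx n o false) - b m)⁻¹ := by
  have hsum := sum_gibbsWeight_pos hb
  have hZ : HasLogDerivAlong (Zfun n) _ b (Pi.single (idx n o false) 1) :=
    (hasLogDerivAlong_prod_pair_sub hb o).mul
      ((HasLogDerivAlong.sum (fun σ _ => hasLogDerivAlong_gibbsWeight hb o σ) hsum.ne').rpow_const
        hsum (1 / 2))
  rw [pderiv', hZ.fderiv_log_apply, eval_observablePoly_base hb,
    eval_derivative_observablePoly_base hb, sum_erase_idx_false]
  simp only [mul_sub, sum_sub_distrib, ← sum_mul, ← mul_div_assoc, ← sum_div]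
  field_simp
  ring

end PartitionFunction

section BoundaryLimits

theorem half_cpow_sq (w : ℂ) : (w ^ ((1 : ℂ) / 2)) ^ 2 = w := by
  simp

theorem half_cpow_mul_half_cpow {w w' : ℝ} (h : 0 < w * w') :
    (w : ℂ) ^ ((1 : ℂ) / 2) * (w' : ℂ) ^ ((1 : ℂ) / 2) =
      (((if 0 < w then 1 else -1) * √(w * w') : ℝ) : ℂ) := by
  have hnonneg {x : ℝ} (hx : 0 ≤ x) : (x : ℂ) ^ ((1 : ℂ) / 2) = (√x : ℂ) := by
    rw [Real.sqrt_eq_rpow, Complex.ofReal_cpow hx]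
    norm_num
  have hnonpos {x : ℝ} (hx : x ≤ 0) : (x : ℂ) ^ ((1 : ℂ) / 2) = (√(-x) : ℂ) * Complex.I := by
    have hexp : Complex.exp (Real.pi * Complex.I * (1 / 2)) = Complex.I :=
      (congrArg Complex.exp (by ring)).trans Complex.exp_pi_div_two_mul_I
    rw [Complex.ofReal_cpow_of_nonpos hx, ← Complex.ofReal_neg, hnonneg (neg_nonneg.mpr hx), hexp]
  rcases pos_and_pos_or_neg_and_neg_of_mul_pos h with ⟨hw, hw'⟩ | ⟨hw, hw'⟩
  · rw [hnonneg hw.le, hnonneg hw'.le, if_pos hw, one_mul, Real.sqrt_mul hw.le, Complex.ofReal_mul]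
  · rw [hnonpos hw.le, hnonpos hw'.le, if_neg hw.not_gt, ← neg_mul_neg w,
      Real.sqrt_mul (neg_nonneg.mpr hw.le), mul_mul_mul_comm, Complex.I_mul_I]
    push_cast
    ring

theorem sub_ofReal_ne_zero_of_mem_UHP {z : ℂ} (hz : z ∈ UHP) (y : ℝ) : z - (y : ℂ) ≠ 0 := by
  intro h
  have him : 0 < z.im := hz
  exact him.ne' (by simpa using congrArg Complex.im h)

instance neBot_nhdsWithin_UHP (x : ℝ) : (𝓝[UHP] (x : ℂ)).NeBot := by
  refine mem_closure_iff_nhdsWithin_neBot.mp ?_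
  rw [UHP, Complex.closure_setOfPred_lt_im]
  simp

theorem tendsto_half_cpow_sub {x y : ℝ} (hxy : x ≠ y) :
    Tendsto (fun z : ℂ => (z - (y : ℂ)) ^ ((1 : ℂ) / 2)) (𝓝[UHP] (x : ℂ))
      (𝓝 (((x - y : ℝ) : ℂ) ^ ((1 : ℂ) / 2))) := by
  have hlog : ContinuousWithinAt Complex.log {z | 0 ≤ z.im} ((x - y : ℝ) : ℂ) := by
    rcases lt_or_gt_of_ne hxy with h | h
    · exact Complex.continuousWithinAt_log_of_re_neg_of_im_zero (by simpa using h) (by simp)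
    · exact (continuousAt_clog (Or.inl (by simpa using h))).continuousWithinAt
  have hsub : Tendsto (fun z : ℂ => z - (y : ℂ)) (𝓝[UHP] (x : ℂ))
      (𝓝[{z | 0 ≤ z.im}] ((x - y : ℝ) : ℂ)) := by
    refine tendsto_nhdsWithin_iff.mpr ⟨?_, ?_⟩
    · rw [Complex.ofReal_sub]
      exact tendsto_nhdsWithin_of_tendsto_nhds (continuous_sub_right _).continuousAt
    · filter_upwards [self_mem_nhdsWithin] with z hz
      simpa using le_of_lt hz
  have hexp := (((hlog.tendsto.comp hsub).mul_const ((1 : ℂ) / 2))).cexp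
  rw [Complex.cpow_def_of_ne_zero (Complex.ofReal_ne_zero.mpr (sub_ne_zero.mpr hxy))]
  refine hexp.congr' ?_
  filter_upwards [self_mem_nhdsWithin] with z hz
  exact (Complex.cpow_def_of_ne_zero (sub_ofReal_ne_zero_of_mem_UHP hz y) _).symm

variable {n : ℕ} {b : Fin (2 * n) → ℝ}

theorem Dfun_sq (b : Fin (2 * n) → ℝ) (z : ℂ) : Dfun n b z ^ 2 = ∏ m, (z - (b m : ℂ)) := by
  rw [Dfun, ← prod_pow]
  exact prod_congr rfl fun m _ => half_cpow_sq _

theorem tendsto_sub_mul_sq_div_prod {P : ℂ[X]} {m : Fin (2 * n)} {l : Filter ℂ} {w : ℂ}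
    (h : Tendsto (fun z => (z - (b m : ℂ)) ^ ((1 : ℂ) / 2) * fP n b P z) l (𝓝 w)) :
    Tendsto (fun z => (z - (b m : ℂ)) * (P.eval z ^ 2 / ∏ j, (z - (b j : ℂ)))) l
      (𝓝 (w ^ 2)) := by
  refine (h.pow 2).congr fun z => ?_
  rw [mul_pow, half_cpow_sq, fP, div_pow, Dfun_sq]

/-- The sign with which the branch of `((z - b_{j,0}) (z - b_{j,1}))^{1/2}` on `ℍ` extends to the
`i`-th pair. -/
def orderSign (i j : Fin n) : ℝ := if j < i then 1 else -1

theorem prod_orderSign_ne_zero (i : Fin n) : ∏ j ∈ univ.erase i, orderSign i j ≠ 0 :=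
  prod_ne_zero_iff.mpr fun j _ => by unfold orderSign; split_ifs <;> norm_num

theorem tendsto_half_cpow_pair (hb : b ∈ chamber n) {i j : Fin n} (hij : i ≠ j) (s : Bool) :
    Tendsto (fun z : ℂ => (z - (b (idx n j false) : ℂ)) ^ ((1 : ℂ) / 2) *
        (z - (b (idx n j true) : ℂ)) ^ ((1 : ℂ) / 2))
      (𝓝[UHP] (b (idx n i s) : ℂ))
      (𝓝 ((orderSign i j * pairSqrt b i s j : ℝ) : ℂ)) := by
  have hmono : StrictMono b := hb
  have hne (t : Bool) := sub_ne_zero.mp (node_sub_ne_zero hb hij s t)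
  have hsign : 0 < b (idx n i s) - b (idx n j false) ↔ j < i := by
    rw [sub_pos, hmono.lt_iff_lt, Fin.lt_def, Fin.lt_def, idx_val, idx_val, Bool.toNat_false]
    have := Fin.val_ne_of_ne hij
    have := s.toNat_le
    omega
  have h := (tendsto_half_cpow_sub (hne false)).mul (tendsto_half_cpow_sub (hne true))
  rw [half_cpow_mul_half_cpow (sub_mul_sub_pos hb hij _ _ _ _)] at h
  simpa only [orderSign, pairSqrt, hsign] using h

theorem fP_mul_half_cpow_pair (b : Fin (2 * n) → ℝ) (P : ℂ[X]) (i : Fin n) {z : ℂ}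
    (hz : z ∈ UHP) :
    fP n b P z * (z - (b (idx n i false) : ℂ)) ^ ((1 : ℂ) / 2) *
        (z - (b (idx n i true) : ℂ)) ^ ((1 : ℂ) / 2) =
      P.eval z / ∏ j ∈ univ.erase i, (z - (b (idx n j false) : ℂ)) ^ ((1 : ℂ) / 2) *
        (z - (b (idx n j true) : ℂ)) ^ ((1 : ℂ) / 2) := by
  have hne (s : Bool) : (z - (b (idx n i s) : ℂ)) ^ ((1 : ℂ) / 2) ≠ 0 := fun h =>
    sub_ofReal_ne_zero_of_mem_UHP hz _ ((Complex.cpow_eq_zero_iff _ _).mp h).1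
  have := hne false
  have := hne true
  rw [fP, Dfun, prod_eq_prod_idx, ← mul_prod_erase _ _ (mem_univ i)]
  field_simp

theorem tendsto_fP_mul_half_cpow_pair (hb : b ∈ chamber n) (P : ℂ[X]) (i : Fin n) (s : Bool) :
    Tendsto
      (fun z : ℂ => fP n b P z * (z - (b (idx n i false) : ℂ)) ^ ((1 : ℂ) / 2) *
        (z - (b (idx n i true) : ℂ)) ^ ((1 : ℂ) / 2))
      (𝓝[UHP] (b (idx n i s) : ℂ))
      (𝓝 (P.eval (b (idx n i s) : ℂ) / (residualModulus b i s : ℂ) /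
        ((∏ j ∈ univ.erase i, orderSign i j : ℝ) : ℂ))) := by
  have hP : Tendsto (fun z : ℂ => P.eval z) (𝓝[UHP] (b (idx n i s) : ℂ))
      (𝓝 (P.eval (b (idx n i s) : ℂ))) :=
    tendsto_nhdsWithin_of_tendsto_nhds P.continuous.continuousAt
  have hD := tendsto_finsetProd (univ.erase i) fun j hj =>
    tendsto_half_cpow_pair hb (ne_of_mem_erase hj).symm s
  rw [← Complex.ofReal_prod, prod_mul_distrib, ← residualModulus] at hD
  have hlim : ((∏ j ∈ univ.erase i, orderSign i j) * residualModulus b i s : ℝ) ≠ 0 :=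
    mul_ne_zero (prod_orderSign_ne_zero i) (residualModulus_pos hb i s).ne'
  have h := hP.div hD (Complex.ofReal_ne_zero.mpr hlim)
  rw [Complex.ofReal_mul, mul_comm, ← div_div] at h
  refine h.congr' ?_
  filter_upwards [self_mem_nhdsWithin] with z hz
  exact (fP_mul_half_cpow_pair b P i hz).symm

theorem sum_eval_div_residualModulus {hn : 0 < n} {P : ℂ[X]} (hb : b ∈ chamber n)
    (hP : Admissible n hn b P) {i : Fin n} (hi : i ≠ ⟨0, hn⟩) :
    ∑ s, P.eval (b (idx n i s) : ℂ) / (residualModulus b i s : ℂ) = 0 := by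
  obtain ⟨L, hleft, hright⟩ := hP.2.1 i (Nat.one_le_iff_ne_zero.mpr fun h => hi (Fin.ext h))
  have hL := tendsto_nhds_unique hleft (tendsto_fP_mul_half_cpow_pair hb P i false)
  have hR := tendsto_nhds_unique hright (tendsto_fP_mul_half_cpow_pair hb P i true)
  have hsign : ((∏ j ∈ univ.erase i, orderSign i j : ℝ) : ℂ) ≠ 0 :=
    Complex.ofReal_ne_zero.mpr (prod_orderSign_ne_zero i)
  refine (div_eq_zero_iff.mp ?_).resolve_right hsign
  rw [Fintype.sum_bool, add_div, ← hL, ← hR, neg_add_cancel]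

end BoundaryLimits

section Residue

variable {ι : Type*} [Fintype ι] {x : ι → ℂ}

theorem sub_ne_zero_of_mem_erase [DecidableEq ι] (hx : Function.Injective x) (m : ι) :
    ∀ j ∈ univ.erase m, x m - x j ≠ 0 :=
  fun _ hj => sub_ne_zero.mpr fun h => ne_of_mem_erase hj (hx h).symm

theorem hasDerivAt_sq_div_prod [DecidableEq ι] (hx : Function.Injective x) (m : ι) (P : ℂ[X])
    (hP : P.eval (x m) ≠ 0) :
    HasDerivAt (fun z => P.eval z ^ 2 / ∏ j ∈ univ.erase m, (z - x j))
      (P.eval (x m) ^ 2 / (∏ j ∈ univ.erase m, (x m - x j)) *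
        (2 * ((derivative P).eval (x m) / P.eval (x m)) - ∑ j ∈ univ.erase m, (x m - x j)⁻¹))
      (x m) := by
  have hne := sub_ne_zero_of_mem_erase hx m
  have hden : ∏ j ∈ univ.erase m, (x m - x j) ≠ 0 := prod_ne_zero_iff.mpr hne
  have hsq : DifferentiableAt ℂ (fun z => P.eval z ^ 2) (x m) := by fun_prop
  have hprod : DifferentiableAt ℂ (fun z => ∏ j ∈ univ.erase m, (z - x j)) (x m) := by fun_prop
  have hlog : logDeriv (fun z => P.eval z ^ 2 / ∏ j ∈ univ.erase m, (z - x j)) (x m) =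
      2 * ((derivative P).eval (x m) / P.eval (x m)) - ∑ j ∈ univ.erase m, (x m - x j)⁻¹ := by
    rw [logDeriv_div (f := fun z => P.eval z ^ 2) (x m) (pow_ne_zero 2 hP) hden hsq hprod,
      logDeriv_fun_pow P.differentiableAt, logDeriv_prod hne fun j _ => by fun_prop]
    simp [logDeriv_apply]
  rw [← hlog, logDeriv_apply, mul_div_cancel₀ _ (div_ne_zero (pow_ne_zero 2 hP) hden)]
  exact (hsq.div hprod hden).hasDerivAt

theorem sub_mul_sq_div_prod [DecidableEq ι] (m : ι) (P : ℂ[X]) {z : ℂ} (hz : z ≠ x m) :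
    (z - x m) * (P.eval z ^ 2 / ∏ j, (z - x j)) =
      P.eval z ^ 2 / ∏ j ∈ univ.erase m, (z - x j) := by
  rw [← mul_prod_erase _ _ (mem_univ m), mul_div_assoc', mul_div_mul_left _ _ (sub_ne_zero.mpr hz)]

theorem sq_div_prod_eq_of_tendsto_residue [DecidableEq ι] (hx : Function.Injective x) {m : ι}
    {P : ℂ[X]} {l : Filter ℂ} [l.NeBot] (hl : l ≤ 𝓝[≠] (x m)) {ρ : ℂ}
    (h : Tendsto (fun z => (z - x m) * (P.eval z ^ 2 / ∏ j, (z - x j))) l (𝓝 ρ)) :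
    P.eval (x m) ^ 2 / ∏ j ∈ univ.erase m, (x m - x j) = ρ := by
  have hcont : ContinuousAt (fun z => P.eval z ^ 2 / ∏ j ∈ univ.erase m, (z - x j)) (x m) :=
    ContinuousAt.div (by fun_prop) (by fun_prop)
      (prod_ne_zero_iff.mpr (sub_ne_zero_of_mem_erase hx m))
  have hne : ∀ᶠ z in l, z ≠ x m := hl self_mem_nhdsWithin
  exact tendsto_nhds_unique (hcont.mono_left (hl.trans nhdsWithin_le_nhds))
    (h.congr' (hne.mono fun z hz => sub_mul_sq_div_prod m P hz))

theorem eval_ne_zero_of_tendsto_residue (hx : Function.Injective x) {m : ι} {P : ℂ[X]}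
    {l : Filter ℂ} [l.NeBot] (hl : l ≤ 𝓝[≠] (x m)) {ρ : ℂ} (hρ : ρ ≠ 0)
    (h : Tendsto (fun z => (z - x m) * (P.eval z ^ 2 / ∏ j, (z - x j))) l (𝓝 ρ)) :
    P.eval (x m) ≠ 0 := by
  classical
  intro h0
  rw [← sq_div_prod_eq_of_tendsto_residue hx hl h, h0, zero_pow two_ne_zero, zero_div] at hρ
  exact hρ rfl

theorem tendsto_slope_of_tendsto_residue [DecidableEq ι] (hx : Function.Injective x) {m : ι}
    {P : ℂ[X]} {l : Filter ℂ} [l.NeBot] (hl : l ≤ 𝓝[≠] (x m)) {ρ : ℂ} (hρ : ρ ≠ 0)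
    (h : Tendsto (fun z => (z - x m) * (P.eval z ^ 2 / ∏ j, (z - x j))) l (𝓝 ρ)) :
    Tendsto (fun z => ((z - x m) * (P.eval z ^ 2 / ∏ j, (z - x j)) - ρ) / (z - x m)) l
      (𝓝 (ρ * (2 * ((derivative P).eval (x m) / P.eval (x m)) -
        ∑ j ∈ univ.erase m, (x m - x j)⁻¹))) := by
  have hP := eval_ne_zero_of_tendsto_residue hx hl hρ h
  have hne : ∀ᶠ z in l, z ≠ x m := hl self_mem_nhdsWithin
  have hslope := (hasDerivAt_sq_div_prod hx m P hP).tendsto_slope.mono_left hl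
  rw [← sq_div_prod_eq_of_tendsto_residue hx hl h]
  refine hslope.congr' (hne.mono fun z hz => ?_)
  simp only [slope_def_field, sub_mul_sq_div_prod m P hz]

end Residue

theorem ofReal_pderiv_log_Zfun {n : ℕ} {hn : 0 < n} {b : Fin (2 * n) → ℝ} {P : ℂ[X]}
    (hb : b ∈ chamber n) (hP : Admissible n hn b P)
    (hne : P.eval (b (idx n ⟨0, hn⟩ false) : ℂ) ≠ 0) :
    ((8 * pderiv' (idx n ⟨0, hn⟩ false) (fun y => Real.log (Zfun n y)) b : ℝ) : ℂ) =
      2 * ((derivative P).eval (b (idx n ⟨0, hn⟩ false) : ℂ) /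
          P.eval (b (idx n ⟨0, hn⟩ false) : ℂ)) -
        ∑ m ∈ univ.erase (idx n ⟨0, hn⟩ false),
          ((b (idx n ⟨0, hn⟩ false) : ℂ) - (b m : ℂ))⁻¹ := by
  have hdeg : P.natDegree < n := hP.1.trans_lt (Nat.sub_one_lt_of_lt hn)
  have hlog := eval_derivative_base_mul hb ⟨0, hn⟩ hdeg
    fun i hi => sum_eval_div_residualModulus hb hP hi
  have hQ : (((observablePoly b ⟨0, hn⟩).eval (b (idx n ⟨0, hn⟩ false)) : ℝ) : ℂ) ≠ 0 := by
    rw [eval_observablePoly_base hb]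
    exact Complex.ofReal_ne_zero.mpr (sum_gibbsWeight_pos hb).ne'
  rw [pderiv_log_Zfun hb, (div_eq_div_iff hne hQ).mpr hlog]
  push_cast
  rfl

end MultipleSLE

open MultipleSLE

/-- the rational function `R = P²/∏ⱼ(z − bⱼ)` (equal to `f_P²` on `ℍ`)
has a simple pole at `b₁` with expansion
`(z − b₁) R(z) = −1 − 8 ∂_{b₁}(log Z)(b) (z − b₁) + o(z − b₁)` as `z → b₁` in `ℍ`. -/
theorem squared_observable_expansion_at_tip (n : ℕ) (hn : 1 ≤ n)
    (b : Fin (2*n) → ℝ) (hb : b ∈ chamber n)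
    (P : Polynomial ℂ) (hP : Admissible n hn b P) :
    Filter.Tendsto
      (fun z : ℂ => (z - (b ⟨0, by omega⟩ : ℂ)) *
        ((Polynomial.eval z P)^2 / ∏ j : Fin (2*n), (z - (b j : ℂ))))
      (nhdsWithin (b ⟨0, by omega⟩ : ℂ) UHP) (nhds (-1)) ∧
    Filter.Tendsto
      (fun z : ℂ =>
        ((z - (b ⟨0, by omega⟩ : ℂ)) *
            ((Polynomial.eval z P)^2 / ∏ j : Fin (2*n), (z - (b j : ℂ))) + 1)
          / (z - (b ⟨0, by omega⟩ : ℂ)))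
      (nhdsWithin (b ⟨0, by omega⟩ : ℂ) UHP)
      (nhds (-8 * ((pderiv' ⟨0, by omega⟩ (fun x => Real.log (Zfun n x)) b : ℝ) : ℂ))) := by
  have hx : Function.Injective fun m => (b m : ℂ) :=
    Complex.ofReal_injective.comp (StrictMono.injective hb)
  have hl : nhdsWithin (b (idx n ⟨0, hn⟩ false) : ℂ) UHP ≤
      nhdsWithin _ {(b (idx n ⟨0, hn⟩ false) : ℂ)}ᶜ :=
    nhdsWithin_mono _ fun z hz => sub_ne_zero.mp (sub_ofReal_ne_zero_of_mem_UHP hz _)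
  have hres := tendsto_sub_mul_sq_div_prod (m := idx n ⟨0, hn⟩ false) hP.2.2
  rw [Complex.I_sq] at hres
  have hslope := tendsto_slope_of_tendsto_residue hx hl (neg_ne_zero.mpr one_ne_zero) hres
  rw [← ofReal_pderiv_log_Zfun hb hP
    (eval_ne_zero_of_tendsto_residue hx hl (neg_ne_zero.mpr one_ne_zero) hres)] at hslope
  simp only [sub_neg_eq_add, neg_one_mul, Complex.ofReal_mul, Complex.ofReal_ofNat, ← neg_mul]
    at hslope
  exact ⟨hres, hslope⟩
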